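/- arXiv:2007.10889 — 2 statements merged into one kernel-verified Lean document; each statement's English description precedes it below -/
import Mathlib

section
/- The full blur shift Σ, with the topology generated by the generalized cylinders, is a Hausdorff topological space. -/
open Set Filter Topology

namespace BlurPaper

/-- The extended alphabet `Ā = A ⊕ V`, where each blurred set `H ∈ V` is regarded
as a new symbol `H̃`. -/
abbrev Symb (A : Type*) (V : Set (Set A)) := A ⊕ {H : Set A // H ∈ V}

/-- `V` is a family of blurred sets: every member is infinite and two distinct members
have finite intersection. -/
def IsBlurFamily {A : Type*} (V : Set (Set A)) : Prop :=
  (∀ H ∈ V, H.Infinite) ∧ ∀ G ∈ V, ∀ H ∈ V, G ≠ H → (G ∩ H).Finite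

/-- The full blur shift `Σ`: sequences over `Ā` such that a blur symbol is followed
by the same blur symbol. -/
def FullBlur (A : Type*) (V : Set (Set A)) : Set (ℕ → Symb A V) :=
  {x | ∀ (i : ℕ) (H : {H : Set A // H ∈ V}), x i = Sum.inr H → x (i + 1) = Sum.inr H}

/-- Generalized cylinder `Z(α)`. -/
def Z (A : Type*) (V : Set (Set A)) (α : List A) : Set (FullBlur A V) :=
  {x | ∀ i : Fin α.length, x.1 i = Sum.inl (α.get i)}

/-- Generalized cylinder `Z(α, H, F)`. -/
def ZH (A : Type*) (V : Set (Set A)) (α : List A) (H : {H : Set A // H ∈ V})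
    (F : Set A) : Set (FullBlur A V) :=
  {x | (∀ i : Fin α.length, x.1 i = Sum.inl (α.get i)) ∧
    (x.1 α.length = Sum.inr H ∨ ∃ a ∈ H.1 \ F, x.1 α.length = Sum.inl a)}

/-- The collection of all generalized cylinders. -/
def Cylinders (A : Type*) (V : Set (Set A)) : Set (Set (FullBlur A V)) :=
  {U | ∃ α : List A, U = Z A V α} ∪
  {U | ∃ (α : List A) (H : {H : Set A // H ∈ V}) (F : Set A),
    F ⊆ H.1 ∧ F.Finite ∧ U = ZH A V α H F}

/-- The topology on the full blur shift generated by the generalized cylinders. -/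
def tau (A : Type*) (V : Set (Set A)) : TopologicalSpace (FullBlur A V) :=
  TopologicalSpace.generateFrom (Cylinders A V)

/-- The shift map on the full blur shift. -/
def shift (A : Type*) (V : Set (Set A)) : FullBlur A V → FullBlur A V :=
  fun x => ⟨fun i => x.1 (i + 1), fun i H h => x.2 (i + 1) H h⟩

/-- The shift map on `A^ℕ`. -/
def shiftSeq (A : Type*) : (ℕ → A) → ℕ → A := fun x i => x (i + 1)

/-- The prodiscrete topology on `A^ℕ` (product of discrete topologies). -/
def prodDiscrete (A : Type*) : TopologicalSpace (ℕ → A) :=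
  @Pi.topologicalSpace ℕ (fun _ => A) fun _ => ⊥

/-- A (classical) shift space over `A`: closed in the prodiscrete topology and
invariant under the shift map. -/
def IsShiftSpace {A : Type*} (Λ : Set (ℕ → A)) : Prop :=
  @IsClosed _ (prodDiscrete A) Λ ∧ ∀ x ∈ Λ, shiftSeq A x ∈ Λ

/-- `w ∈ B(Y)`: the finite word `w` appears as an initial word of some element of `Y`. -/
def InLang {A : Type*} (Y : Set (ℕ → A)) (w : List A) : Prop :=
  ∃ x ∈ Y, ∀ i : Fin w.length, x i = w.get i

/-- The follower set `F_Y(w) = {a : w a ∈ B(Y)}`. -/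
def Fol {A : Type*} (Y : Set (ℕ → A)) (w : List A) : Set A :=
  {a | InLang Y (w ++ [a])}

/-- The predecessor set `P_Y(a) = {b : b a ∈ B(Y)}`. -/
def Pred {A : Type*} (Y : Set (ℕ → A)) (a : A) : Set A :=
  {b | InLang Y [b, a]}

/-- `B₁(Y)`: the set of letters occurring in sequences of `Y`. -/
def letters {A : Type*} (Y : Set (ℕ → A)) : Set A :=
  {a | ∃ x ∈ Y, ∃ i, x i = a}

/-- The canonical embedding `A^ℕ → Σ`. -/
def embed (A : Type*) (V : Set (Set A)) : (ℕ → A) → FullBlur A V :=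
  fun x => ⟨fun i => Sum.inl (x i), fun _ _ h => absurd h (by simp)⟩

/-- The point `(a₀ … a_{n-1} H̃ H̃ H̃ …)` of the full blur shift. -/
def wordBlur {A : Type*} {V : Set (Set A)} (α : List A) (H : {H : Set A // H ∈ V}) :
    FullBlur A V :=
  ⟨fun i => if h : i < α.length then Sum.inl (α.get ⟨i, h⟩) else Sum.inr H, by
    intro i K hK
    by_cases h : i < α.length
    · simp only [dif_pos h] at hK
      exact absurd hK (by simp)
    · simp only [dif_neg h] at hK
      simp only [dif_neg (by omega : ¬ i + 1 < α.length)]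
      exact hK⟩

/-- The boundary `∂Y`: points `(a₀ … a_{n-1} H̃ H̃ …)` with `a₀ … a_{n-1} ∈ B(Y)` and
`F_Y(a₀ … a_{n-1}) ∩ H` infinite. -/
def boundary (A : Type*) (V : Set (Set A)) (Y : Set (ℕ → A)) : Set (FullBlur A V) :=
  {z | ∃ (α : List A) (H : {H : Set A // H ∈ V}),
    z = wordBlur α H ∧ InLang Y α ∧ (Fol Y α ∩ H.1).Infinite}

/-- The blur shift space `Σ_Y = Y ∪ ∂Y` of `Y` with resolution `V`. -/
def SigmaOf (A : Type*) (V : Set (Set A)) (Y : Set (ℕ → A)) : Set (FullBlur A V) :=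
  embed A V '' Y ∪ boundary A V Y

/-- The subspace topology inherited from the full blur shift. -/
def subTau (A : Type*) (V : Set (Set A)) (X : Set (FullBlur A V)) :
    TopologicalSpace X :=
  TopologicalSpace.induced Subtype.val (tau A V)

/-- `V_Λ`: the blurred sets that appear in `Σ_Λ`, i.e. those meeting `B₁(Λ)` in an
infinite set. -/
def VLam (A : Type*) (V : Set (Set A)) (Λ : Set (ℕ → A)) : Set (Set A) :=
  {H | H ∈ V ∧ (letters Λ ∩ H).Infinite}

/-!
The extended alphabet `Ā` carries the topology of a Mrówka (Isbell) space: letters are isolated and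
the neighbourhoods of `H̃` contain all but finitely many letters of `H`. It is Hausdorff as soon as
distinct blurred sets have finite intersection. Two distinct points of `Σ` agree up to their first
difference on a word of letters `α`, since a common blur symbol would make them agree forever; on
`Z(α)` the next symbol depends continuously on the point, so a separation of the two differing
symbols in `Ā` pulls back to a separation of the two points.
-/

section FullBlurShift

variable {A : Type*} {V : Set (Set A)}

section ExtendedAlphabet

/-- The Mrówka (Isbell) topology on the extended alphabet `Ā`: letters are isolated, and a
neighbourhood of `H̃` omits only finitely many letters of `H`. It is used to separate symbols; the
open sets are specified directly, by their trace on each blurred set whose symbol they contain. -/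
abbrev mrowkaTopology (V : Set (Set A)) : TopologicalSpace (Symb A V) where
  IsOpen U := ∀ H : {H : Set A // H ∈ V}, Sum.inr H ∈ U → (H.1 \ Sum.inl ⁻¹' U).Finite
  isOpen_univ H _ := by simp
  isOpen_inter U W hU hW H hH := by
    rw [preimage_inter, sdiff_inter]
    exact (hU H hH.1).union (hW H hH.2)
  isOpen_sUnion S hS H := by
    rintro ⟨U, hUS, hHU⟩
    exact (hS U hUS H hHU).subset
      (sdiff_subset_sdiff_right (preimage_mono (subset_sUnion_of_mem hUS)))

attribute [local instance] mrowkaTopology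

lemma isOpen_mrowkaTopology_iff {U : Set (Symb A V)} :
    IsOpen U ↔ ∀ H : {H : Set A // H ∈ V}, Sum.inr H ∈ U → (H.1 \ Sum.inl ⁻¹' U).Finite :=
  Iff.rfl

lemma isClopen_singleton_inl (a : A) : IsClopen ({Sum.inl a} : Set (Symb A V)) := by
  refine ⟨⟨isOpen_mrowkaTopology_iff.2 fun H _ => ?_⟩, isOpen_mrowkaTopology_iff.2 fun H hH => ?_⟩
  · exact (finite_singleton a).subset fun b hb => by simpa using hb.2
  · simp at hH

lemma isOpen_insert_inr_image_inl {H : {H : Set A // H ∈ V}} {S : Set A}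
    (hS : (H.1 \ S).Finite) :
    IsOpen (insert (Sum.inr H) (Sum.inl '' S) : Set (Symb A V)) := by
  refine isOpen_mrowkaTopology_iff.2 fun K hK => ?_
  obtain rfl : K = H := by simpa using hK
  exact hS.subset (sdiff_subset_sdiff_right fun a ha => Or.inr (mem_image_of_mem _ ha))

theorem t2Space_mrowkaTopology (hV : V.Pairwise fun G H => (G ∩ H).Finite) :
    T2Space (Symb A V) := by
  refine ⟨fun s t hst => ?_⟩
  rcases s with a | G
  · exact ⟨{Sum.inl a}, {Sum.inl a}ᶜ, (isClopen_singleton_inl a).isOpen,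
      (isClopen_singleton_inl a).compl.isOpen, rfl, hst.symm, disjoint_compl_right⟩
  rcases t with b | H
  · exact ⟨{Sum.inl b}ᶜ, {Sum.inl b}, (isClopen_singleton_inl b).compl.isOpen,
      (isClopen_singleton_inl b).isOpen, hst, rfl, disjoint_compl_left⟩
  have hGH : G ≠ H := fun h => hst (congrArg Sum.inr h)
  have hfin : (G.1 ∩ H.1).Finite := hV G.2 H.2 (Subtype.coe_ne_coe.2 hGH)
  refine ⟨insert (Sum.inr G) (Sum.inl '' (G.1 \ H.1)), insert (Sum.inr H) (Sum.inl '' H.1),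
    isOpen_insert_inr_image_inl (by rwa [sdiff_sdiff_right_self]),
    isOpen_insert_inr_image_inl (by simp), mem_insert _ _, mem_insert _ _, ?_⟩
  have hdisj : Disjoint (Sum.inl '' (G.1 \ H.1) : Set (Symb A V)) (Sum.inl '' H.1) :=
    (disjoint_image_iff Sum.inl_injective).2 disjoint_sdiff_left
  simpa [disjoint_insert_left, disjoint_insert_right, hGH, hGH.symm] using hdisj

end ExtendedAlphabet

lemma isOpen_Z (α : List A) : IsOpen[tau A V] (Z A V α) :=
  TopologicalSpace.isOpen_generateFrom_of_mem (Or.inl ⟨α, rfl⟩)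

lemma isOpen_ZH (α : List A) (H : {H : Set A // H ∈ V}) {F : Set A} (hFH : F ⊆ H.1)
    (hF : F.Finite) : IsOpen[tau A V] (ZH A V α H F) :=
  TopologicalSpace.isOpen_generateFrom_of_mem (Or.inr ⟨α, H, F, hFH, hF, rfl⟩)

lemma mem_Z_iff_map_eq {α : List A} {x : FullBlur A V} :
    x ∈ Z A V α ↔ (List.range α.length).map x.1 = α.map Sum.inl := by
  simp [Z, List.ext_getElem_iff, Fin.forall_iff]

lemma mem_Z_append_singleton {α : List A} {a : A} {x : FullBlur A V} :
    x ∈ Z A V (α ++ [a]) ↔ x ∈ Z A V α ∧ x.1 α.length = Sum.inl a := by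
  simp [mem_Z_iff_map_eq, List.range_succ]

lemma isOpen_Z_inter_preimage (α : List A) {U : Set (Symb A V)}
    (hU : IsOpen[mrowkaTopology V] U) :
    IsOpen[tau A V] (Z A V α ∩ (fun x => x.1 α.length) ⁻¹' U) := by
  let := tau A V
  refine isOpen_iff_forall_mem_open.2 ?_
  rintro x ⟨hxα, hxU⟩
  rcases hx : x.1 α.length with a | H
  · refine ⟨Z A V (α ++ [a]), fun z hz => ?_, isOpen_Z _, mem_Z_append_singleton.2 ⟨hxα, hx⟩⟩
    obtain ⟨hzα, hza⟩ := mem_Z_append_singleton.1 hz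
    exact ⟨hzα, mem_preimage.2 (mem_of_eq_of_mem (hza.trans hx.symm) hxU)⟩
  · have hHU : Sum.inr H ∈ U := mem_of_eq_of_mem hx.symm hxU
    refine ⟨ZH A V α H (H.1 \ Sum.inl ⁻¹' U), ?_,
      isOpen_ZH α H sdiff_subset (isOpen_mrowkaTopology_iff.1 hU H hHU), hxα, Or.inl hx⟩
    rintro z ⟨hzα, hz | ⟨a, ha, hz⟩⟩
    · exact ⟨hzα, mem_preimage.2 (mem_of_eq_of_mem hz hHU)⟩
    · rw [sdiff_sdiff_right_self] at ha
      exact ⟨hzα, mem_preimage.2 (mem_of_eq_of_mem hz ha.2)⟩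

lemma eq_inr_of_le (x : FullBlur A V) {H : {H : Set A // H ∈ V}} {i j : ℕ}
    (hij : i ≤ j) (hi : x.1 i = Sum.inr H) : x.1 j = Sum.inr H :=
  Nat.le_induction hi (fun k _ hk => x.2 k H hk) j hij

lemma exists_word_mem_Z {x : FullBlur A V} {n : ℕ} (h : ∀ i < n, ∃ a, x.1 i = Sum.inl a) :
    ∃ α : List A, α.length = n ∧ x ∈ Z A V α := by
  choose a ha using fun i : Fin n => h i i.2
  exact ⟨List.ofFn a, List.length_ofFn, fun i => by
    rw [List.get_ofFn]
    exact ha (i.cast List.length_ofFn)⟩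

lemma exists_common_word_of_ne {x y : FullBlur A V} (hxy : x ≠ y) :
    ∃ α : List A, x ∈ Z A V α ∧ y ∈ Z A V α ∧ x.1 α.length ≠ y.1 α.length := by
  set n := PiNat.firstDiff x.1 y.1
  have hne : x.1 n ≠ y.1 n := PiNat.apply_firstDiff_ne (Subtype.coe_ne_coe.2 hxy)
  have heq : ∀ i < n, x.1 i = y.1 i := fun i hi => PiNat.apply_eq_of_lt_firstDiff hi
  have hletter : ∀ i < n, ∃ a, x.1 i = Sum.inl a := by
    intro i hi
    rcases hx : x.1 i with a | H
    · exact ⟨a, rfl⟩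
    · have hy : y.1 i = Sum.inr H := (heq i hi).symm.trans hx
      exact absurd ((eq_inr_of_le x hi.le hx).trans (eq_inr_of_le y hi.le hy).symm) hne
  obtain ⟨α, hα, hxα⟩ := exists_word_mem_Z hletter
  exact ⟨α, hxα, fun i => (heq i (hα ▸ i.2)).symm.trans (hxα i), hα ▸ hne⟩

theorem t2Space_fullBlur_general (hV : V.Pairwise fun G H => (G ∩ H).Finite) :
    @T2Space (FullBlur A V) (tau A V) := by
  let := mrowkaTopology V
  have := t2Space_mrowkaTopology hV
  let := tau A V
  refine ⟨fun x y hxy => ?_⟩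
  obtain ⟨α, hxα, hyα, hne⟩ := exists_common_word_of_ne hxy
  obtain ⟨U, W, hU, hW, hxU, hyW, hUW⟩ := t2_separation hne
  exact ⟨_, _, isOpen_Z_inter_preimage α hU, isOpen_Z_inter_preimage α hW, ⟨hxα, hxU⟩,
    ⟨hyα, hyW⟩, (hUW.preimage _).mono inter_subset_right inter_subset_right⟩

end FullBlurShift

/-- The full blur shift, with the topology generated by the
generalized cylinders, is Hausdorff. -/
theorem t2Space_fullBlur {A : Type*} (V : Set (Set A)) (hV : IsBlurFamily V) :
    @T2Space (FullBlur A V) (tau A V) :=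
  t2Space_fullBlur_general fun G hG H hH => hV.2 G hG H hH

end BlurPaper
end

section
/- A blur shift space Σ_Λ, with the subspace topology inherited from the full blur shift Σ, is second countable if and only if both B_1(Λ) and V_Λ = {H ∈ V : B_1(Λ) ∩ H is infinite} are countable. -/
open Set Filter Topology

namespace BlurPaper

/-!
Letters and members of `V_Λ` index points of `Σ_Λ` that open cylinders separate from one another:
for a letter `a = x_i`, the point `x` and the cylinder `Z(x₀ … x_i)`; for `H ∈ V_Λ`, the point
`H̃ H̃ …` and the cylinder `Z(ε, H, ∅)`. Such an indexed family is discrete, so it is countable when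
`Σ_Λ` is second countable. Shift invariance gives `F_Λ(ε) = B₁(Λ)`, which is what puts `H̃ H̃ …`
into `Σ_Λ`.

Conversely, although `V` may be uncountable, the generating cylinders have only countably many
traces on `Σ_Λ`. That of `Z(α, H, F)` depends on `F` only through `F ∩ B₁(Λ)`, and if `H ∉ V_Λ` then
`H̃` does not occur in `Σ_Λ` and the trace is the union of those of `Z(αa)` over the finite set
of letters `a ∈ (B₁(Λ) ∩ H) ∖ F`.
-/

theorem countable_of_isOpen_of_preimage_eq_singleton {ι X : Type*} [TopologicalSpace X]
    [SecondCountableTopology X] {f : ι → X} {U : ι → Set X} (hU : ∀ i, IsOpen (U i))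
    (hf : ∀ i, f ⁻¹' U i = {i}) : Countable ι := by
  let _ : TopologicalSpace ι := .induced f inferInstance
  have : SecondCountableTopology ι := TopologicalSpace.secondCountableTopology_induced ι X f
  have : DiscreteTopology ι := discreteTopology_iff_isOpen_singleton.2 fun i =>
    hf i ▸ (hU i).preimage continuous_induced_dom
  exact TopologicalSpace.separableSpace_iff_countable.1 inferInstance

theorem countable_setOf_forall_mem_list {A : Type*} {s : Set A} (hs : s.Countable) :
    {α : List A | ∀ a ∈ α, a ∈ s}.Countable := by
  have := hs.to_subtype
  rw [← range_list_map_coe]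
  exact countable_range _

section BlurShift

variable {A : Type*} {V : Set (Set A)} {Λ : Set (ℕ → A)}

theorem mem_letters_of_inLang {w : List A} (hw : InLang Λ w) {a : A} (ha : a ∈ w) :
    a ∈ letters Λ := by
  obtain ⟨x, hx, hxw⟩ := hw
  obtain ⟨i, rfl⟩ := List.get_of_mem ha
  exact ⟨x, hx, i, hxw i⟩

theorem Fol_subset_letters (w : List A) : Fol Λ w ⊆ letters Λ := fun _ ha =>
  mem_letters_of_inLang ha (by simp)

theorem exists_mem_apply_zero_eq (hΛ : MapsTo (shiftSeq A) Λ Λ) {a : A} (ha : a ∈ letters Λ) :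
    ∃ x ∈ Λ, x 0 = a := by
  obtain ⟨x, hx, i, rfl⟩ := ha
  induction i generalizing x with
  | zero => exact ⟨x, hx, rfl⟩
  | succ _ ih => exact ih (shiftSeq A x) (hΛ hx)

theorem Fol_nil (hΛ : MapsTo (shiftSeq A) Λ Λ) : Fol Λ [] = letters Λ := by
  refine (Fol_subset_letters []).antisymm fun a ha => ?_
  obtain ⟨x, hx, rfl⟩ := exists_mem_apply_zero_eq hΛ ha
  exact ⟨x, hx, by simp⟩

theorem mem_letters_of_apply_eq_inl {x : FullBlur A V} (hx : x ∈ SigmaOf A V Λ) {i : ℕ} {a : A}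
    (h : x.1 i = Sum.inl a) : a ∈ letters Λ := by
  rcases hx with ⟨y, hy, rfl⟩ | ⟨α, H, rfl, hα, -⟩
  · exact ⟨y, hy, i, Sum.inl_injective h⟩
  · by_cases hi : i < α.length
    · simp only [wordBlur, dif_pos hi] at h
      exact mem_letters_of_inLang hα (Sum.inl_injective h ▸ List.get_mem _ _)
    · simp only [wordBlur, dif_neg hi, reduceCtorEq] at h

theorem mem_VLam_of_apply_eq_inr {x : FullBlur A V} (hx : x ∈ SigmaOf A V Λ) {i : ℕ}
    {H : {H : Set A // H ∈ V}} (h : x.1 i = Sum.inr H) : H.1 ∈ VLam A V Λ := by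
  rcases hx with ⟨y, -, rfl⟩ | ⟨α, K, rfl, -, hK⟩
  · cases h
  · by_cases hi : i < α.length
    · simp only [wordBlur, dif_pos hi, reduceCtorEq] at h
    · simp only [wordBlur, dif_neg hi] at h
      obtain rfl := Sum.inr_injective h
      exact ⟨K.2, hK.mono (inter_subset_inter_left _ (Fol_subset_letters α))⟩

theorem wordBlur_nil_mem_SigmaOf (hΛ : MapsTo (shiftSeq A) Λ Λ) {H : {H : Set A // H ∈ V}}
    (hH : H.1 ∈ VLam A V Λ) : wordBlur [] H ∈ SigmaOf A V Λ := by
  obtain ⟨_, ⟨x, hx, -⟩, -⟩ := hH.2.nonempty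
  exact Or.inr ⟨[], H, rfl, ⟨x, hx, fun i => i.elim0⟩, (Fol_nil hΛ).symm ▸ hH.2⟩

theorem isOpen_preimage_Z (X : Set (FullBlur A V)) (α : List A) :
    IsOpen[subTau A V X] (Subtype.val ⁻¹' Z A V α) :=
  ⟨_, TopologicalSpace.isOpen_generateFrom_of_mem (Or.inl ⟨α, rfl⟩), rfl⟩

theorem isOpen_preimage_ZH (X : Set (FullBlur A V)) (α : List A) (H : {H : Set A // H ∈ V})
    {F : Set A} (hFH : F ⊆ H.1) (hF : F.Finite) :
    IsOpen[subTau A V X] (Subtype.val ⁻¹' ZH A V α H F) :=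
  ⟨_, TopologicalSpace.isOpen_generateFrom_of_mem (Or.inr ⟨α, H, F, hFH, hF, rfl⟩), rfl⟩

theorem embed_mem_Z_ofFn {x y : ℕ → A} {n : ℕ} :
    embed A V x ∈ Z A V (List.ofFn fun j : Fin n => y j) ↔ ∀ j < n, x j = y j := by
  simp [Z, embed, Fin.forall_iff]

theorem wordBlur_nil_mem_ZH_nil {H K : {H : Set A // H ∈ V}} {F : Set A} :
    wordBlur [] H ∈ ZH A V [] K F ↔ H = K := by
  simp [ZH, wordBlur]

theorem mem_Z_concat {x : FullBlur A V} {α : List A} {a : A} :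
    x ∈ Z A V (α ++ [a]) ↔ x ∈ Z A V α ∧ x.1 α.length = Sum.inl a := by
  simp only [Z, mem_ofPred_eq, List.get_eq_getElem, Fin.forall_iff, List.length_append,
    List.length_singleton, Nat.forall_lt_succ_right', List.getElem_concat_length]
  refine and_congr_left fun _ => forall₂_congr fun i hi => ?_
  rw [List.getElem_append_left hi]

theorem countable_image_apply
    (h : @SecondCountableTopology (SigmaOf A V Λ) (subTau A V (SigmaOf A V Λ))) (i : ℕ) :
    ((fun x : ℕ → A => x i) '' Λ).Countable := by
  let _ := subTau A V (SigmaOf A V Λ)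
  choose x hxΛ hxi using fun a : (fun x : ℕ → A => x i) '' Λ => a.2
  let point (a : (fun x : ℕ → A => x i) '' Λ) : SigmaOf A V Λ :=
    ⟨embed A V (x a), Or.inl ⟨x a, hxΛ a, rfl⟩⟩
  have point_mem_iff (a b) :
      (point a).1 ∈ Z A V (List.ofFn fun j : Fin (i + 1) => x b j) ↔ a = b := by
    refine embed_mem_Z_ofFn.trans ⟨fun hab => Subtype.ext ?_, fun hab _ _ => hab ▸ rfl⟩
    rw [← hxi a, ← hxi b]
    exact hab i i.lt_succ_self
  exact countable_of_isOpen_of_preimage_eq_singleton (f := point)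
    (fun _ => isOpen_preimage_Z _ _) fun b => ext fun a => point_mem_iff a b

theorem countable_letters
    (h : @SecondCountableTopology (SigmaOf A V Λ) (subTau A V (SigmaOf A V Λ))) :
    (letters Λ).Countable := by
  refine (countable_iUnion (countable_image_apply h)).mono ?_
  rintro _ ⟨x, hx, i, rfl⟩
  exact mem_iUnion.2 ⟨i, x, hx, rfl⟩

theorem countable_VLam (hΛ : MapsTo (shiftSeq A) Λ Λ)
    (h : @SecondCountableTopology (SigmaOf A V Λ) (subTau A V (SigmaOf A V Λ))) :
    (VLam A V Λ).Countable := by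
  let _ := subTau A V (SigmaOf A V Λ)
  let symbol (H : VLam A V Λ) : {H : Set A // H ∈ V} := ⟨H.1, H.2.1⟩
  have symbol_inj {H K} : symbol H = symbol K ↔ H = K := by simp [symbol, Subtype.ext_iff]
  exact countable_of_isOpen_of_preimage_eq_singleton
    (f := fun H => (⟨wordBlur [] (symbol H), wordBlur_nil_mem_SigmaOf hΛ H.2⟩ : SigmaOf A V Λ))
    (fun K => isOpen_preimage_ZH _ [] (symbol K) (empty_subset _) finite_empty)
    fun K => ext fun H => wordBlur_nil_mem_ZH_nil.trans symbol_inj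

theorem preimage_Z_eq_empty {α : List A} (hα : ¬∀ a ∈ α, a ∈ letters Λ) :
    (Subtype.val ⁻¹' Z A V α : Set (SigmaOf A V Λ)) = ∅ := by
  refine eq_empty_of_forall_notMem fun x hx => hα fun a ha => ?_
  obtain ⟨i, rfl⟩ := List.get_of_mem ha
  exact mem_letters_of_apply_eq_inl x.2 (hx i)

theorem ZH_subset_Z (α : List A) (H : {H : Set A // H ∈ V}) (F : Set A) :
    ZH A V α H F ⊆ Z A V α := fun _ hx => hx.1

theorem preimage_ZH_inter_letters (α : List A) (H : {H : Set A // H ∈ V}) (F : Set A) :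
    (Subtype.val ⁻¹' ZH A V α H (F ∩ letters Λ) : Set (SigmaOf A V Λ)) =
      Subtype.val ⁻¹' ZH A V α H F := by
  ext x
  refine and_congr_right fun _ => or_congr_right <| exists_congr fun a =>
    and_congr_left fun hxa => ?_
  simp [mem_letters_of_apply_eq_inl x.2 hxa]

theorem preimage_ZH_of_notMem_VLam (α : List A) {H : {H : Set A // H ∈ V}}
    (hH : H.1 ∉ VLam A V Λ) (F : Set A) :
    (Subtype.val ⁻¹' ZH A V α H F : Set (SigmaOf A V Λ)) =
      ⋃ a ∈ (letters Λ ∩ H.1) \ F, Subtype.val ⁻¹' Z A V (α ++ [a]) := by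
  ext x
  simp only [mem_iUnion₂, mem_preimage, mem_Z_concat, exists_prop]
  constructor
  · rintro ⟨hα, hxH | ⟨a, ⟨haH, haF⟩, hxa⟩⟩
    · exact absurd (mem_VLam_of_apply_eq_inr x.2 hxH) hH
    · exact ⟨a, ⟨⟨mem_letters_of_apply_eq_inl x.2 hxa, haH⟩, haF⟩, hα, hxa⟩
  · rintro ⟨a, ⟨⟨-, haH⟩, haF⟩, hα, hxa⟩
    exact ⟨hα, Or.inr ⟨a, ⟨haH, haF⟩, hxa⟩⟩

theorem countable_range_preimage_Z (hB : (letters Λ).Countable) :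
    (range fun α => (Subtype.val ⁻¹' Z A V α : Set (SigmaOf A V Λ))).Countable := by
  refine (((countable_setOf_forall_mem_list hB).image fun α => Subtype.val ⁻¹' Z A V α).insert
    ∅).mono ?_
  rintro _ ⟨α, rfl⟩
  by_cases hα : ∀ a ∈ α, a ∈ letters Λ
  · exact Or.inr ⟨α, hα, rfl⟩
  · exact Or.inl (preimage_Z_eq_empty hα)

theorem countable_setOf_preimage_ZH (hB : (letters Λ).Countable)
    (hVΛ : (VLam A V Λ).Countable) :
    {U : Set (SigmaOf A V Λ) |
      ∃ α H F, F.Finite ∧ U = Subtype.val ⁻¹' ZH A V α H F}.Countable := by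
  have hwords := countable_setOf_forall_mem_list hB
  have hfin := countable_ofPred_finite_subset hB
  have hblurs : {H : {H : Set A // H ∈ V} | H.1 ∈ VLam A V Λ}.Countable :=
    hVΛ.preimage Subtype.val_injective
  have htraces := (hwords.image2 (hblurs.prod hfin) fun α p =>
      (Subtype.val ⁻¹' ZH A V α p.1 p.2 : Set (SigmaOf A V Λ))).union <|
    hwords.image2 hfin fun α E => ⋃ a ∈ E, Subtype.val ⁻¹' Z A V (α ++ [a])
  refine (htraces.insert ∅).mono ?_
  rintro _ ⟨α, H, F, hF, rfl⟩
  by_cases hα : ∀ a ∈ α, a ∈ letters Λ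
  · by_cases hH : H.1 ∈ VLam A V Λ
    · exact Or.inr <| Or.inl ⟨α, hα, (H, F ∩ letters Λ),
        ⟨hH, hF.inter_of_left _, inter_subset_right⟩, preimage_ZH_inter_letters α H F⟩
    · have hfinite : (letters Λ ∩ H.1).Finite := not_infinite.1 fun hinf => hH ⟨H.2, hinf⟩
      exact Or.inr <| Or.inr ⟨α, hα, (letters Λ ∩ H.1) \ F,
        ⟨hfinite.sdiff, sdiff_subset.trans inter_subset_left⟩,
        (preimage_ZH_of_notMem_VLam α hH F).symm⟩
  · exact Or.inl <| subset_empty_iff.1 <|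
      (preimage_mono (ZH_subset_Z α H F)).trans (preimage_Z_eq_empty hα).subset

theorem countable_preimage_cylinders (hB : (letters Λ).Countable)
    (hVΛ : (VLam A V Λ).Countable) :
    (preimage Subtype.val '' Cylinders A V : Set (Set (SigmaOf A V Λ))).Countable := by
  refine ((countable_range_preimage_Z hB).union (countable_setOf_preimage_ZH hB hVΛ)).mono ?_
  rintro _ ⟨_, ⟨α, rfl⟩ | ⟨α, H, F, -, hF, rfl⟩, rfl⟩
  · exact Or.inl ⟨α, rfl⟩
  · exact Or.inr ⟨α, H, F, hF, rfl⟩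

theorem secondCountable_of_countable (hB : (letters Λ).Countable)
    (hVΛ : (VLam A V Λ).Countable) :
    @SecondCountableTopology (SigmaOf A V Λ) (subTau A V (SigmaOf A V Λ)) :=
  @SecondCountableTopology.mk _ (subTau A V (SigmaOf A V Λ))
    ⟨_, countable_preimage_cylinders hB hVΛ, induced_generateFrom_eq⟩

end BlurShift

theorem secondCountable_iff_general {A : Type*} (V : Set (Set A)) (Λ : Set (ℕ → A))
    (hΛ : MapsTo (shiftSeq A) Λ Λ) :
    @SecondCountableTopology (SigmaOf A V Λ) (subTau A V (SigmaOf A V Λ)) ↔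
      (letters Λ).Countable ∧ (VLam A V Λ).Countable :=
  ⟨fun h => ⟨countable_letters h, countable_VLam hΛ h⟩,
    fun ⟨hB, hVΛ⟩ => secondCountable_of_countable hB hVΛ⟩

/-- A blur shift space `Σ_Λ`, with the subspace topology, is second
countable if and only if both `B₁(Λ)` and `V_Λ` are countable. -/
theorem secondCountable_iff {A : Type*} (V : Set (Set A))
    (hV : IsBlurFamily V) (Λ : Set (ℕ → A)) (hΛ : IsShiftSpace Λ) :
    @SecondCountableTopology (SigmaOf A V Λ) (subTau A V (SigmaOf A V Λ)) ↔
      (letters Λ).Countable ∧ (VLam A V Λ).Countable :=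
  secondCountable_iff_general V Λ hΛ.2

end BlurPaper
end
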